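/- arXiv:1510.02421 — 3 statements merged into one kernel-verified Lean document; each statement's English description precedes it below -/
import Mathlib

section
/- For m ≥ n ≥ 3, M(C_n □ C_m) = Z(C_n □ C_m) = 2n−1 if m = n and n is odd, and M(C_n □ C_m) = Z(C_n □ C_m) = 2n otherwise. -/
namespace PaperPD

open SimpleGraph

variable {V α β : Type*}

/-- Vertices that eventually become blue in the standard zero forcing process
starting from the blue set `B`. -/
inductive ZFClosure (G : SimpleGraph V) (B : Set V) : V → Prop
  | init (v : V) (hv : v ∈ B) : ZFClosure G B v
  | force (u w : V) (hu : ZFClosure G B u) (huw : G.Adj u w)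
      (h : ∀ x, G.Adj u x → x ≠ w → ZFClosure G B x) : ZFClosure G B w

/-- `B` is a zero forcing set of `G`. -/
def IsZeroForcingSet (G : SimpleGraph V) (B : Set V) : Prop :=
  ∀ v, ZFClosure G B v

/-- The zero forcing number `Z(G)`. -/
noncomputable def zeroForcingNumber (G : SimpleGraph V) [Fintype V] : ℕ :=
  sInf {k | ∃ B : Finset V, B.card = k ∧ IsZeroForcingSet G ↑B}

/-- Vertices that eventually become blue in the skew zero forcing process
starting from the blue set `B` (the forcing vertex need not be blue). -/
inductive SkewZFClosure (G : SimpleGraph V) (B : Set V) : V → Prop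
  | init (v : V) (hv : v ∈ B) : SkewZFClosure G B v
  | force (u w : V) (huw : G.Adj u w)
      (h : ∀ x, G.Adj u x → x ≠ w → SkewZFClosure G B x) : SkewZFClosure G B w

/-- `B` is a skew zero forcing set of `G`. -/
def IsSkewZeroForcingSet (G : SimpleGraph V) (B : Set V) : Prop :=
  ∀ v, SkewZFClosure G B v

/-- The skew zero forcing number `Z⁻(G)`. -/
noncomputable def skewZeroForcingNumber (G : SimpleGraph V) [Fintype V] : ℕ :=
  sInf {k | ∃ B : Finset V, B.card = k ∧ IsSkewZeroForcingSet G ↑B}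

/-- The closed neighborhood `N[S]` of a set of vertices. -/
def closedNbhd (G : SimpleGraph V) (S : Set V) : Set V :=
  S ∪ {v | ∃ u ∈ S, G.Adj u v}

/-- `S` is a power dominating set of `G`, i.e. `N[S]` is a zero forcing set. -/
def IsPowerDominatingSet (G : SimpleGraph V) (S : Set V) : Prop :=
  IsZeroForcingSet G (closedNbhd G S)

/-- The power domination number `γ_P(G)`. -/
noncomputable def powerDominationNumber (G : SimpleGraph V) [Fintype V] : ℕ :=
  sInf {k | ∃ S : Finset V, S.card = k ∧ IsPowerDominatingSet G ↑S}

/-- `S` is a dominating set of `G` (`N[S] = V`). -/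
def IsDominatingSet (G : SimpleGraph V) (S : Set V) : Prop :=
  ∀ v, v ∈ closedNbhd G S

/-- The domination number `γ(G)`. -/
noncomputable def dominationNumber (G : SimpleGraph V) [Fintype V] : ℕ :=
  sInf {k | ∃ S : Finset V, S.card = k ∧ IsDominatingSet G ↑S}

/-- `S` is a total dominating set of `G` (`N(S) = V`). -/
def IsTotalDominatingSet (G : SimpleGraph V) (S : Set V) : Prop :=
  ∀ v, ∃ u ∈ S, G.Adj u v

/-- The total domination number `γ_t(G)`. -/
noncomputable def totalDominationNumber (G : SimpleGraph V) [Fintype V] : ℕ :=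
  sInf {k | ∃ S : Finset V, S.card = k ∧ IsTotalDominatingSet G ↑S}

/-- The degree of a vertex. -/
noncomputable def deg (G : SimpleGraph V) (v : V) : ℕ :=
  (G.neighborSet v).ncard

/-- The maximum degree `Δ(G)`. -/
noncomputable def maxDeg (G : SimpleGraph V) [Fintype V] : ℕ :=
  Finset.univ.sup fun v => deg G v

/-- `A` is a symmetric real matrix whose off-diagonal nonzero pattern is
described by the graph `G`, i.e. `A ∈ S(G)`. -/
def MatrixOfGraph (G : SimpleGraph V) (A : Matrix V V ℝ) : Prop :=
  A.IsSymm ∧ ∀ i j, i ≠ j → (A i j ≠ 0 ↔ G.Adj i j)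

/-- The nullity of a square real matrix. -/
noncomputable def nullity [Fintype V] [DecidableEq V] (A : Matrix V V ℝ) : ℕ :=
  Fintype.card V - A.rank

/-- The maximum nullity `M(G)`. -/
noncomputable def maxNullity (G : SimpleGraph V) [Fintype V] [DecidableEq V] : ℕ :=
  sSup {k | ∃ A : Matrix V V ℝ, MatrixOfGraph G A ∧ nullity A = k}

/-- The tensor (direct) product of two simple graphs. -/
def tensorProd (G : SimpleGraph α) (H : SimpleGraph β) : SimpleGraph (α × β) where
  Adj p q := G.Adj p.1 q.1 ∧ H.Adj p.2 q.2
  symm.symm _ _ h := ⟨h.1.symm, h.2.symm⟩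
  loopless.irrefl p h := G.loopless.irrefl p.1 h.1

/-- The lexicographic product of two simple graphs. -/
def lexProd (G : SimpleGraph α) (H : SimpleGraph β) : SimpleGraph (α × β) where
  Adj p q := G.Adj p.1 q.1 ∨ (p.1 = q.1 ∧ H.Adj p.2 q.2)
  symm.symm _ _ h := h.elim (fun h' => Or.inl h'.symm) (fun h' => Or.inr ⟨h'.1.symm, h'.2.symm⟩)
  loopless.irrefl p h := h.elim (fun h' => G.loopless.irrefl p.1 h') (fun h' => H.loopless.irrefl p.2 h'.2)


lemma exists_weights (R : ℕ) : ∃ (a : ℝ) (w : ℕ → ℝ), (∀ r < R, 0 < w r) ∧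
    ∀ l ≤ R, (2 * l : ℝ) = a + ∑ r ∈ Finset.range R, w r / ((2 * l : ℝ) - (2 * r + 1)) := by
  classical
  let P : Polynomial ℝ := ∏ l ∈ Finset.range (R + 1), (Polynomial.X - Polynomial.C (2 * l : ℝ))
  let v : ℕ → ℝ := fun r => 2 * r + 1
  have hvinj : Function.Injective v := by
    intro a b h
    simp only [v] at h
    exact_mod_cast (by linarith : (a:ℝ) = b)
  let Q : Polynomial ℝ := Lagrange.nodal (Finset.range R) v
  have hP : P.Monic := Polynomial.monic_prod_of_monic _ _ fun i _ => Polynomial.monic_X_sub_C _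
  have hQ : Q.Monic := Lagrange.nodal_monic
  have hPd : P.natDegree = R + 1 := by
    simp only [P]; rw [Polynomial.natDegree_finsetProd_X_sub_C_eq_card]; simp
  have hQd : Q.natDegree = R := by
    simp only [Q]; rw [Lagrange.natDegree_nodal]; simp
  have hD1 : (P /ₘ Q).natDegree = 1 := by
    rw [Polynomial.natDegree_divByMonic _ hQ, hPd, hQd]; omega
  have hDm : (P /ₘ Q).Monic := by
    rw [Polynomial.Monic, Polynomial.leadingCoeff_divByMonic_of_monic hQ]
    · exact hP
    · rw [Polynomial.degree_eq_natDegree hP.ne_zero, Polynomial.degree_eq_natDegree hQ.ne_zero,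
        hPd, hQd]
      exact_mod_cast Nat.le_succ R
  obtain ⟨b, hb⟩ : ∃ b, P /ₘ Q = Polynomial.X + Polynomial.C b :=
    ⟨_, hDm.eq_X_add_C hD1⟩
  have hdiv := Polynomial.modByMonic_add_div P Q
  have hrem : P %ₘ Q = Lagrange.interpolate (Finset.range R) v (fun r => P.eval (v r)) := by
    apply Lagrange.eq_interpolate_of_eval_eq _ hvinj.injOn
    · have := Polynomial.degree_modByMonic_lt P hQ
      rw [Polynomial.degree_eq_natDegree hQ.ne_zero, hQd] at this
      rwa [Finset.card_range]
    · intro i hi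
      have h := congrArg (Polynomial.eval (v i)) hdiv
      rw [Polynomial.eval_add, Polynomial.eval_mul] at h
      rw [show Polynomial.eval (v i) Q = 0 from Lagrange.eval_nodal_at_node hi] at h
      simpa using h
  refine ⟨-b, fun r => -(Lagrange.nodalWeight (Finset.range R) v r * P.eval (v r)), ?_, ?_⟩
  · intro r hr
    have h1 : P.eval (v r) = (v r - 2 * r) *
        ∏ s ∈ Finset.range R, (v r - 2 * (((if s < r then s else s + 1 : ℕ)) : ℝ)) := by
      simp only [P, Polynomial.eval_prod]
      simp only [Polynomial.eval_sub, Polynomial.eval_X, Polynomial.eval_C]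
      rw [Finset.prod_range, Fin.prod_univ_succAbove _ (⟨r, by omega⟩ : Fin (R + 1)),
        Finset.prod_range]
      congr 1
      apply Finset.prod_congr rfl
      intro s _
      congr 3
      simp only [Fin.succAbove, Fin.lt_def]
      split_ifs with h1 h2 h2 <;> simp_all
    have hmem : r ∈ Finset.range R := Finset.mem_range.2 hr
    simp only []
    rw [h1, ← Finset.mul_prod_erase _ _ hmem, Lagrange.nodalWeight]
    have e1 : v r - 2 * r = 1 := by simp [v]
    have e2 : v r - 2 * (((if r < r then r else r + 1 : ℕ)) : ℝ) = -1 := by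
      simp [v]; ring
    rw [e1, e2]
    have : 0 < ∏ s ∈ (Finset.range R).erase r,
        ((v r - v s)⁻¹ * (v r - 2 * (((if s < r then s else s + 1 : ℕ)) : ℝ))) := by
      apply Finset.prod_pos
      intro s hs
      have hne := Finset.ne_of_mem_erase hs
      rcases lt_or_gt_of_ne hne with h | h
      · have h' : (s:ℝ) + 1 ≤ r := by exact_mod_cast h
        apply mul_pos
        · apply inv_pos.2; simp only [v]; linarith
        · simp only [h, if_true, v]; linarith
      · have h' : (r:ℝ) + 1 ≤ s := by exact_mod_cast h
        apply mul_pos_of_neg_of_neg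
        · apply inv_lt_zero.2; simp only [v]; linarith
        · simp only [not_lt.2 h.le, if_false, v]; push_cast; linarith
    rw [Finset.prod_mul_distrib] at this
    linarith
  · intro l hl
    have hne : ∀ r, (2 * l : ℝ) ≠ v r := by
      intro r h
      simp only [v] at h
      have : 2 * l = 2 * r + 1 := by exact_mod_cast h
      omega
    have h := congrArg (Polynomial.eval (2 * l : ℝ)) hdiv
    rw [Polynomial.eval_add, Polynomial.eval_mul, hrem, hb,
      Lagrange.eval_interpolate_not_at_node _ (fun i _ => hne i)] at h
    have hP0 : P.eval (2 * l : ℝ) = 0 := by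
      simp only [P, Polynomial.eval_prod]
      apply Finset.prod_eq_zero (i := l) (by simp; omega)
      simp
    have hQ0 : Q.eval (2 * l : ℝ) ≠ 0 := Lagrange.eval_nodal_not_at_node (fun i _ => hne i)
    rw [hP0, ← mul_add] at h
    have h := (mul_eq_zero.1 h).resolve_left hQ0
    simp only [Polynomial.eval_add, Polynomial.eval_X, Polynomial.eval_C] at h
    have h3 : ∑ r ∈ Finset.range R, -(Lagrange.nodalWeight (Finset.range R) v r * P.eval (v r)) /
        ((2 * l : ℝ) - (2 * r + 1)) = - ∑ i ∈ Finset.range R,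
        Lagrange.nodalWeight (Finset.range R) v i * (2 * (l:ℝ) - v i)⁻¹ * P.eval (v i) := by
      rw [← Finset.sum_neg_distrib]
      apply Finset.sum_congr rfl
      intro i _
      simp only [v]
      rw [div_eq_mul_inv]; ring
    rw [h3]; linarith

lemma exists_x (N : ℕ) (hN : 0 < N) (w : ℕ → ℝ) (hw : ∀ j < N, 0 < w j) :
    ∃ (s : ℝ) (x : ℕ → ℝ), 0 < s ∧ ∀ j < N, 0 < x j ∧
      (Even j → x j - s * (((-1) ^ j * (N - 1).choose j : ℝ) / x j) = 0) ∧
      (Odd j → (x j - s * (((-1) ^ j * (N - 1).choose j : ℝ) / x j)) ^ 2 = w j) := by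
  have : Nonempty (Fin N) := ⟨⟨0, hN⟩⟩
  obtain ⟨j0, h0⟩ := Finite.exists_min (fun j : Fin N => w j / (4 * ((N - 1).choose j : ℝ)))
  have hC : ∀ j < N, (0:ℝ) < (N - 1).choose j := by
    intro j hj
    exact_mod_cast Nat.choose_pos (by omega)
  set s := w j0 / (4 * ((N - 1).choose j0 : ℝ)) with hs
  have hspos : 0 < s := by
    have := hC j0 j0.2
    have := hw j0 j0.2
    positivity
  have hsle : ∀ j < N, 4 * (s * ((N - 1).choose j : ℝ)) ≤ w j := by
    intro j hj
    have := h0 ⟨j, hj⟩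
    simp only at this
    rw [le_div_iff₀ (by have := hC j hj; positivity)] at this
    linarith
  refine ⟨s, fun j => if Even j then √(s * (N - 1).choose j)
    else (√(w j) + √(w j - 4 * (s * (N - 1).choose j))) / 2, hspos, fun j hj => ?_⟩
  have hc := hC j hj
  by_cases he : Even j
  · simp only [he, if_true, he.neg_one_pow, one_mul]
    have hx : 0 < √(s * (N - 1).choose j) := Real.sqrt_pos.2 (by positivity)
    refine ⟨hx, fun _ => ?_, fun ho => absurd he (Nat.not_even_iff_odd.2 ho)⟩
    have h2 := Real.mul_self_sqrt (show 0 ≤ s * ((N - 1).choose j : ℝ) by positivity)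
    field_simp
    nlinarith
  · have ho := Nat.not_even_iff_odd.1 he
    simp only [he, if_false, ho.neg_one_pow]
    have h1 := Real.mul_self_sqrt (hw j hj).le
    have h2 := Real.mul_self_sqrt (show 0 ≤ w j - 4 * (s * ((N - 1).choose j : ℝ)) by linarith [hsle j hj])
    have hp := Real.sqrt_pos.2 (hw j hj)
    have hq := Real.sqrt_nonneg (w j - 4 * (s * ((N - 1).choose j : ℝ)))
    set p := √(w j)
    set q := √(w j - 4 * (s * ((N - 1).choose j : ℝ)))
    refine ⟨by positivity, fun h => absurd h (by simp), fun _ => ?_⟩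
    have : (p + q) / 2 - s * (-1 * ((N - 1).choose j : ℝ) / ((p + q) / 2)) = p := by
      have : p + q ≠ 0 := by positivity
      field_simp
      nlinarith
    rw [this, sq, h1]
lemma alt_sum_zero (N i : ℕ) (hi : i < N) :
    ∑ j : Fin (N + 1), ((-1 : ℝ) ^ (j : ℕ) * (N.choose j : ℝ)) * (j : ℝ) ^ i = 0 := by
  have h := congrFun (fwdDiff_iter_pow_eq_zero_of_lt (R := ℝ) hi) 0
  rw [fwdDiff_iter_eq_sum_shift] at h
  simp only [Pi.zero_apply] at h
  rw [Fin.sum_univ_eq_sum_range (fun j => ((-1 : ℝ) ^ j * (N.choose j : ℝ)) * (j : ℝ) ^ i)]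
  have h2 : ∀ j ∈ Finset.range (N + 1), ((-1 : ℝ) ^ j * (N.choose j : ℝ)) * (j : ℝ) ^ i
     = (-1) ^ N * (((-1 : ℤ) ^ (N - j) * (N.choose j : ℤ)) • (0 + j • (1:ℝ)) ^ i) := by
    intro j hj
    have : j ≤ N := by simpa [Nat.lt_succ_iff] using hj
    obtain ⟨k, rfl⟩ := Nat.exists_eq_add_of_le this
    simp
    have h1 : (-1 : ℝ) ^ k * (-1) ^ k = 1 := by rw [← mul_pow]; norm_num
    rw [pow_add]
    linear_combination (-(-1 : ℝ) ^ j * ((j + k).choose j : ℝ) * (j : ℝ) ^ i) * h1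
  rw [Finset.sum_congr rfl h2, ← Finset.mul_sum, h, mul_zero]

lemma lanczos (N : ℕ) (hN : 0 < N) (x : Fin N → ℝ) (hx : ∀ j, x j ≠ 0) :
    ∃ Q : Matrix (Fin N) (Fin N) ℝ, Q * Q.transpose = 1 ∧
      (∀ i l : Fin N, (l : ℕ) = i + 1 →
        (Q * Matrix.diagonal (fun j : Fin N => ((j : ℕ) : ℝ)) * Q.transpose) l i ≠ 0) ∧
      (∀ i l : Fin N, (i : ℕ) + 1 < l →
        (Q * Matrix.diagonal (fun j : Fin N => ((j : ℕ) : ℝ)) * Q.transpose) l i = 0) ∧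
      (∃ α : ℝ, α ≠ 0 ∧ ∀ l : Fin N, (Q.mulVec x) l = if (l : ℕ) = 0 then α else 0) ∧
      (∃ β : ℝ, β ≠ 0 ∧ ∀ l : Fin N,
        (Q.mulVec (fun j => ((-1) ^ (j : ℕ) * ((N - 1).choose j : ℝ)) / x j)) l
          = if (l : ℕ) = N - 1 then β else 0) := by
  classical
  let f : Fin N → EuclideanSpace ℝ (Fin N) := fun i => WithLp.toLp 2 (fun j => x j * (j : ℝ) ^ (i : ℕ))
  let D : EuclideanSpace ℝ (Fin N) →ₗ[ℝ] EuclideanSpace ℝ (Fin N) :=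
    { toFun := fun v => WithLp.toLp 2 (fun j => (j : ℝ) * v j)
      map_add' := by intro u v; ext j; simp; ring
      map_smul' := by intro u v; ext j; simp; ring }
  have hDf : ∀ i l : Fin N, (l : ℕ) = i + 1 → D (f i) = f l := by
    intro i l h
    ext j
    simp [D, f, h, pow_succ]; ring
  have hli : LinearIndependent ℝ f := by
    rw [Fintype.linearIndependent_iff]
    intro c hc
    have hV : (Matrix.vandermonde (fun j : Fin N => ((j : ℕ) : ℝ))).det ≠ 0 := by
      rw [Matrix.det_vandermonde_ne_zero_iff]
      intro a b h
      simpa [Fin.ext_iff] using h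
    have : (Matrix.vandermonde (fun j : Fin N => ((j : ℕ) : ℝ))).mulVec c = 0 := by
      ext j
      have h := congrArg (fun v : EuclideanSpace ℝ (Fin N) => v j) hc
      simp [f] at h
      simp only [Matrix.mulVec, dotProduct, Matrix.vandermonde_apply, Pi.zero_apply]
      have : x j * ∑ i : Fin N, (j : ℝ) ^ (i : ℕ) * c i = 0 := by
        rw [Finset.mul_sum, ← h]
        apply Finset.sum_congr rfl
        intros; ring
      exact (mul_eq_zero.1 this).resolve_left (hx j)
    have := Matrix.eq_zero_of_mulVec_eq_zero hV this
    intro i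
    simp [this]
  let g : Fin N → EuclideanSpace ℝ (Fin N) := InnerProductSpace.gramSchmidt ℝ f
  have hg0 : ∀ i, g i ≠ 0 := fun i => InnerProductSpace.gramSchmidt_ne_zero i hli
  let T : ℕ → Submodule ℝ (EuclideanSpace ℝ (Fin N)) := fun k => Submodule.span ℝ (f '' {i | (i : ℕ) < k})
  have hgf : ∀ i : Fin N, g i - f i ∈ T i := by
    intro i
    have h := InnerProductSpace.gramSchmidt_def'' ℝ f i
    have h2 : g i - f i = -∑ j ∈ Finset.Iio i, (inner ℝ (g j) (f i) / (‖g j‖ : ℝ) ^ 2) • g j := by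
      have h4 := eq_sub_of_add_eq' h.symm
      rw [← neg_sub]
      exact congrArg Neg.neg h4.symm
    rw [h2]
    apply neg_mem
    apply Submodule.sum_mem
    intro j hj
    apply Submodule.smul_mem
    have h3 := InnerProductSpace.gramSchmidt_mem_span ℝ f (le_refl j)
    refine Submodule.span_mono ?_ h3
    apply Set.image_mono
    intro k hk
    have hk : k ≤ j := hk
    have hj : j < i := by simpa using hj
    exact lt_of_le_of_lt hk hj
  have hgT : ∀ (i : Fin N) (k : ℕ) , k ≤ (i : ℕ) → ∀ u ∈ T k, inner ℝ (g i) u = 0 := by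
    intro i k hk u hu
    induction hu using Submodule.span_induction with
    | mem u hu =>
      obtain ⟨l, hl, rfl⟩ := hu
      exact InnerProductSpace.gramSchmidt_inv_triangular ℝ f (Fin.lt_def.2 (lt_of_lt_of_le hl hk))
    | zero => simp
    | add u v _ _ h1 h2 => rw [inner_add_right, h1, h2, add_zero]
    | smul a u _ h => rw [inner_smul_right, h, mul_zero]
  have hDT : ∀ k, k < N → ∀ u ∈ T k, D u ∈ T (k + 1) := by
    intro k hk u hu
    induction hu using Submodule.span_induction with
    | mem u hu =>
      obtain ⟨l, hl, rfl⟩ := hu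
      have hl : (l : ℕ) < k := hl
      rw [hDf l ⟨l + 1, by omega⟩ rfl]
      exact Submodule.subset_span ⟨_, by simpa using hl, rfl⟩
    | zero => simp
    | add u v _ _ h1 h2 => rw [map_add]; exact add_mem h1 h2
    | smul a u _ h => rw [map_smul]; exact Submodule.smul_mem _ _ h
  have hTm : ∀ k l, k ≤ l → T k ≤ T l := by
    intro k l h
    apply Submodule.span_mono
    apply Set.image_mono
    intro i hi
    exact lt_of_lt_of_le hi h
  have hgT1 : ∀ i : Fin N, g i ∈ T (i + 1) := by
    intro i
    have h1 := hTm i (i + 1) (by omega) (hgf i)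
    have h2 : f i ∈ T (i + 1) := Submodule.subset_span ⟨i, by simp, rfl⟩
    simpa using add_mem h1 h2
  have hgn : ∀ i, ‖g i‖⁻¹ ≠ 0 := fun i => inv_ne_zero (norm_ne_zero_iff.2 (hg0 i))
  let Q : Matrix (Fin N) (Fin N) ℝ := Matrix.of fun l j => ‖g l‖⁻¹ * g l j
  have hQv : ∀ (u : Fin N → ℝ) l, Q.mulVec u l = ‖g l‖⁻¹ * inner ℝ (g l) (WithLp.toLp 2 u) := by
    intro u l
    simp only [Q, Matrix.mulVec, dotProduct, Matrix.of_apply, PiLp.inner_apply, Finset.mul_sum]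
    apply Finset.sum_congr rfl
    intro j _
    simp; ring
  have hQQ : Q * Q.transpose = 1 := by
    ext l i
    have : (Q * Q.transpose) l i = Q.mulVec (fun j => ‖g i‖⁻¹ * g i j) l := by
      simp [Matrix.mul_apply, Matrix.mulVec, dotProduct, Q]
    rw [this, hQv]
    have h2 : (WithLp.toLp 2 (fun j => ‖g i‖⁻¹ * g i j) : EuclideanSpace ℝ (Fin N)) = ‖g i‖⁻¹ • g i := by
      ext j; simp
    rw [h2, inner_smul_right]
    by_cases h : l = i
    · subst h
      rw [real_inner_self_eq_norm_sq, Matrix.one_apply_eq]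
      have := norm_ne_zero_iff.2 (hg0 l)
      field_simp
    · rw [Matrix.one_apply_ne h, InnerProductSpace.gramSchmidt_orthogonal ℝ f h]
      simp
  have hJ : ∀ l i, (Q * Matrix.diagonal (fun j : Fin N => ((j : ℕ) : ℝ)) * Q.transpose) l i
      = ‖g l‖⁻¹ * (‖g i‖⁻¹ * inner ℝ (g l) (D (g i))) := by
    intro l i
    have : (Q * Matrix.diagonal (fun j : Fin N => ((j : ℕ) : ℝ)) * Q.transpose) l i
        = Q.mulVec (fun j => (j : ℝ) * (‖g i‖⁻¹ * g i j)) l := by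
      rw [Matrix.mul_apply]
      simp [Matrix.mul_diagonal, Matrix.mulVec, dotProduct, Q, mul_assoc]
    rw [this, hQv]
    have h2 : (WithLp.toLp 2 (fun j : Fin N => (j : ℝ) * (‖g i‖⁻¹ * g i j)) : EuclideanSpace ℝ (Fin N))
        = ‖g i‖⁻¹ • D (g i) := by
      ext j; simp [D]; ring
    rw [h2, inner_smul_right]
  have hQQ' : Q.transpose * Q = 1 := mul_eq_one_comm.1 hQQ
  have hinj : ∀ u : Fin N → ℝ, Q.mulVec u = 0 → u = 0 := by
    intro u hu
    have : Q.transpose.mulVec (Q.mulVec u) = 0 := by rw [hu]; simp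
    rwa [Matrix.mulVec_mulVec, hQQ', Matrix.one_mulVec] at this
  have hone : ∀ (u : Fin N → ℝ) (k : ℕ), u ≠ 0 → (∀ l : Fin N, (l : ℕ) ≠ k → Q.mulVec u l = 0) →
      ∃ α : ℝ, α ≠ 0 ∧ ∀ l : Fin N, (Q.mulVec u) l = if (l : ℕ) = k then α else 0 := by
    intro u k hu h
    by_cases hk : k < N
    · refine ⟨Q.mulVec u ⟨k, hk⟩, ?_, ?_⟩
      · intro h0
        apply hu
        apply hinj
        ext l
        by_cases hl : (l : ℕ) = k
        · have : l = ⟨k, hk⟩ := Fin.ext hl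
          rw [this, h0]; rfl
        · rw [h l hl]; rfl
      · intro l
        split_ifs with hl
        · have : l = ⟨k, hk⟩ := Fin.ext hl
          rw [this]
        · exact h l hl
    · exfalso
      apply hu
      apply hinj
      ext l
      rw [h l (by have := l.2; omega)]; rfl
  refine ⟨Q, hQQ, ?_, ?_, ?_, ?_⟩
  · intro i l hl
    rw [hJ]
    refine mul_ne_zero (hgn l) (mul_ne_zero (hgn i) ?_)
    have h1 : D (g i - f i) ∈ T (i + 1) := hDT i i.2 _ (hgf i)
    have e1 := hgT l (i + 1) (by omega) _ h1
    rw [map_sub, inner_sub_right, hDf i l hl] at e1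
    have e2 := hgT l l le_rfl _ (hgf l)
    rw [inner_sub_right] at e2
    have : inner ℝ (g l) (D (g i)) = inner ℝ (g l) (g l) := by linarith
    rw [this]
    exact inner_self_ne_zero.2 (hg0 l)
  · intro i l hl
    rw [hJ, hgT l (i + 1 + 1) (by omega) _ (hDT (i + 1) (by have := l.2; omega) _ (hgT1 i))]
    simp
  · apply hone
    · intro h
      exact hx ⟨0, hN⟩ (congrFun h _)
    · intro l hl
      rw [hQv]
      have : (WithLp.toLp 2 x : EuclideanSpace ℝ (Fin N)) = f ⟨0, hN⟩ := by
        ext j; simp [f]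
      rw [this, hgT l 1 (by omega) _ (Submodule.subset_span ⟨_, by simp, rfl⟩), mul_zero]
  · apply hone
    · intro h
      have := congrFun h ⟨0, hN⟩
      simp at this
      exact hx _ this
    · intro l hl
      rw [hQv]
      have key : ∀ u ∈ T (N - 1), inner ℝ u (WithLp.toLp 2 (fun j : Fin N =>
          ((-1) ^ (j : ℕ) * ((N - 1).choose j : ℝ)) / x j) : EuclideanSpace ℝ (Fin N)) = 0 := by
        intro u hu
        induction hu using Submodule.span_induction with
        | mem u hu =>
          obtain ⟨l, hl, rfl⟩ := hu
          obtain ⟨M, rfl⟩ : ∃ M, N = M + 1 := ⟨N - 1, by omega⟩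
          rw [← alt_sum_zero M l (by simpa using hl), PiLp.inner_apply]
          apply Finset.sum_congr rfl
          intro j _
          have := hx j
          simp [f]
          field_simp
        | zero => simp
        | add u v _ _ h1 h2 => rw [inner_add_left, h1, h2, add_zero]
        | smul a u _ h => rw [inner_smul_left, h, mul_zero]
      rw [key _ (hTm _ _ (by have := l.2; omega) (hgT1 l)), mul_zero]
lemma cyc_adj {n : ℕ} (hn : 3 ≤ n) (u v : Fin n) : (cycleGraph n).Adj u v ↔
    ((u : ℕ) + 1 = v ∨ (v : ℕ) + 1 = u ∨ ((u : ℕ) = 0 ∧ (v : ℕ) + 1 = n) ∨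
      ((v : ℕ) = 0 ∧ (u : ℕ) + 1 = n)) := by
  have key : ∀ u v : Fin n, (u - v).val = if (v : ℕ) ≤ u then (u : ℕ) - v else n - v + u := by
    intro u v
    rw [Fin.sub_def]
    simp only
    have := u.2
    have := v.2
    split_ifs with h
    · rw [show n - (v : ℕ) + u = (u - v) + n by omega, Nat.add_mod_right, Nat.mod_eq_of_lt (by omega)]
    · rw [Nat.mod_eq_of_lt (by omega)]
  rw [cycleGraph_adj', key, key]
  have := u.2
  have := v.2
  split_ifs <;> omega

lemma sum_odd (N : ℕ) (w : ℕ → ℝ) (c : ℝ) :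
    ∑ j ∈ Finset.range N, (if Odd j then w (j / 2) / (c - j) else 0)
      = ∑ r ∈ Finset.range (N / 2), w r / (c - (2 * r + 1)) := by
  induction N with
  | zero => simp
  | succ N ih =>
    rw [Finset.sum_range_succ, ih]
    by_cases h : Odd N
    · obtain ⟨k, rfl⟩ := h
      have h1 : (2 * k + 1) / 2 = k := by omega
      have h2 : (2 * k + 1 + 1) / 2 = k + 1 := by omega
      rw [h1, h2, Finset.sum_range_succ, if_pos ⟨k, rfl⟩]
      push_cast
      rfl
    · rw [if_neg h, add_zero]
      have : (N + 1) / 2 = N / 2 := by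
        obtain ⟨k, rfl⟩ := Nat.not_odd_iff_even.1 h
        omega
      rw [this]

lemma iep (n : ℕ) (hn : 3 ≤ n) : ∃ (A U : Matrix (Fin n) (Fin n) ℝ),
    MatrixOfGraph (cycleGraph n) A ∧ U.det ≠ 0 ∧
    A * U = U * Matrix.diagonal (fun i : Fin n => ((2 * ((i : ℕ) / 2) : ℕ) : ℝ)) := by
  classical
  obtain ⟨N, rfl⟩ : ∃ N, n = N + 1 := ⟨n - 1, by omega⟩
  obtain ⟨a, w, hw, hwl⟩ := exists_weights (N / 2)
  obtain ⟨s, x, hs, hx⟩ := exists_x N (by omega) (fun j => if Odd j then w (j / 2) else 1) (by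
    intro j hj
    split_ifs with h
    · obtain ⟨k, rfl⟩ := h
      exact hw _ (by omega)
    · norm_num)
  obtain ⟨Q, hQQ, hJ1, hJ0, ⟨α, hα, hQx⟩, ⟨β, hβ, hQy⟩⟩ :=
    lanczos N (by omega) (fun j => x j) (fun j => (hx j j.2).1.ne')
  let D : Matrix (Fin N) (Fin N) ℝ := Matrix.diagonal (fun j : Fin N => ((j : ℕ) : ℝ))
  let z : Fin N → ℝ := fun j => x j - s * (((-1) ^ (j : ℕ) * (N - 1).choose j : ℝ) / x j)
  have hze : ∀ j : Fin N, Even (j : ℕ) → z j = 0 := fun j h => (hx j j.2).2.1 h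
  have hzo : ∀ j : Fin N, Odd (j : ℕ) → z j ^ 2 = w (j / 2) := fun j h => by
    have := (hx j j.2).2.2 h
    rwa [if_pos h] at this
  have hQz : ∀ l, Q.mulVec z l = (if (l : ℕ) = 0 then α else 0) - s * (if (l : ℕ) = N - 1 then β else 0) := by
    intro l
    rw [← hQx, ← hQy]
    have : z = (fun j : Fin N => x j) - s • (fun j : Fin N => (((-1) ^ (j : ℕ) * (N - 1).choose j : ℝ) / x j)) := by
      ext j; simp [z]
    rw [this, Matrix.mulVec_sub, Matrix.mulVec_smul]
    simp
  have hQQ' : Q.transpose * Q = 1 := mul_eq_one_comm.1 hQQ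
  let J := Q * D * Q.transpose
  have hJs : ∀ i l, J i l = J l i := by
    have : J.transpose = J := by
      simp [J, D, Matrix.transpose_mul, Matrix.mul_assoc]
    intro i l
    conv_lhs => rw [← this]
    rfl
  let A : Matrix (Fin (N + 1)) (Fin (N + 1)) ℝ := Matrix.of fun i j =>
    Fin.cases (Fin.cases a (fun l => Q.mulVec z l) j)
      (fun k => Fin.cases (Q.mulVec z k) (fun l => J k l) j) i
  have A00 : A 0 0 = a := rfl
  have A0s : ∀ l : Fin N, A 0 l.succ = Q.mulVec z l := fun _ => rfl
  have As0 : ∀ l : Fin N, A l.succ 0 = Q.mulVec z l := fun _ => rfl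
  have Ass : ∀ k l : Fin N, A k.succ l.succ = J k l := fun _ _ => rfl
  let c : ℕ → ℝ := fun i => if Even i then 1 else 0
  let v : ℕ → Fin N → ℝ := fun i j => if Even i then z j / ((i : ℝ) - j) else if (j : ℕ) + 1 = i then 1 else 0
  let d : ℕ → ℝ := fun i => ((2 * (i / 2) : ℕ) : ℝ)
  have dE : ∀ i, Even i → d i = i := by
    intro i h; obtain ⟨k, rfl⟩ := h; simp only [d]; congr 1; omega
  have dO : ∀ i, ¬ Even i → d i + 1 = i := by
    intro i h; obtain ⟨k, rfl⟩ := Nat.not_even_iff_odd.1 h; simp only [d]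
    rw [show 2 * ((2 * k + 1) / 2) = 2 * k by omega]; push_cast; ring
  -- arrow eigenvector equations
  have E1 : ∀ i < N + 1, a * c i + z ⬝ᵥ v i = d i * c i := by
    intro i hi
    by_cases h : Even i
    · have hd := dE i h
      simp only [c, v, h, if_true, dotProduct, mul_one, hd]
      obtain ⟨l, rfl⟩ := h
      have e := hwl l (by omega)
      rw [← sum_odd, ← Fin.sum_univ_eq_sum_range (fun j => if Odd j then w (j / 2) / (2 * (l : ℝ) - j) else 0)] at e
      push_cast
      rw [← two_mul]
      refine Eq.trans ?_ e.symm
      congr 1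
      apply Finset.sum_congr rfl
      intro j _
      split_ifs with ho
      · rw [← hzo j ho]; ring
      · rw [hze j (Nat.not_odd_iff_even.1 ho)]; ring
    · simp only [c, v, h, if_false, dotProduct, mul_zero, zero_add]
      apply Finset.sum_eq_zero
      intro j _
      split_ifs with hj
      · rw [hze j]
        · simp
        · rw [← hj, Nat.even_add_one, not_not] at h; exact h
      · simp
  have E2 : ∀ i < N + 1, ∀ j : Fin N, c i * z j + (j : ℝ) * v i j = d i * v i j := by
    intro i hi j
    by_cases h : Even i
    · have hd := dE i h
      simp only [c, v, h, if_true, one_mul, hd]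
      by_cases ho : Odd (j : ℕ)
      · have : (i : ℝ) - j ≠ 0 := by
          rw [sub_ne_zero]
          intro h'
          have : i = j := by exact_mod_cast h'
          rw [this] at h
          exact (Nat.not_even_iff_odd.2 ho) h
        field_simp
        ring
      · rw [hze j (Nat.not_odd_iff_even.1 ho)]; simp
    · simp only [c, v, h, if_false, zero_mul, zero_add]
      split_ifs with hj
      · have := dO i h
        rw [← hj] at this ⊢
        push_cast at this
        linarith
      · simp
  have ortho : ∀ i < N + 1, ∀ k < N + 1, i ≠ k → c i * c k + v i ⬝ᵥ v k = 0 := by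
    intro i hi k hk hik
    by_cases hd : d i = d k
    · have hd' : i / 2 = k / 2 := by
        simp only [d] at hd
        have : 2 * (i / 2) = 2 * (k / 2) := by exact_mod_cast hd
        omega
      have main : ∀ i k : ℕ, Even i → k = i + 1 → c i * c k + v i ⬝ᵥ v k = 0 := by
        intro i k h hk
        have hk' : ¬ Even k := by rw [hk, Nat.even_add_one, not_not]; exact h
        simp only [c, v, h, hk', if_true, if_false, dotProduct, mul_zero, zero_add]
        apply Finset.sum_eq_zero
        intro j _
        split_ifs with hj
        · rw [hze j]
          · simp
          · have : (j : ℕ) = i := by omega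
            rw [this]; exact h
        · simp
      rcases Nat.even_or_odd' i with ⟨p, rfl | rfl⟩
      · exact main _ _ (by simp) (by omega)
      · have := main k (2 * p + 1) ⟨p, by omega⟩ (by omega)
        rw [dotProduct_comm, mul_comm]; exact this
    · have e1 := E1 i hi
      have e2 := E1 k hk
      have e3 : c i * (z ⬝ᵥ v k) + ∑ j : Fin N, (j : ℝ) * v i j * v k j = d i * (v i ⬝ᵥ v k) := by
        simp only [dotProduct, Finset.mul_sum, ← Finset.sum_add_distrib]
        apply Finset.sum_congr rfl
        intro j _
        linear_combination v k j * E2 i hi j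
      have e4 : c k * (z ⬝ᵥ v i) + ∑ j : Fin N, (j : ℝ) * v i j * v k j = d k * (v i ⬝ᵥ v k) := by
        simp only [dotProduct, Finset.mul_sum, ← Finset.sum_add_distrib]
        apply Finset.sum_congr rfl
        intro j _
        linear_combination v i j * E2 k hk j
      have : (d i - d k) * (c i * c k + v i ⬝ᵥ v k) = 0 := by
        linear_combination e4 - e3 + c i * e2 - c k * e1
      exact (mul_eq_zero.1 this).resolve_left (sub_ne_zero.2 hd)
  have posd : ∀ i < N + 1, 0 < c i * c i + v i ⬝ᵥ v i := by
    intro i hi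
    have h0 : 0 ≤ v i ⬝ᵥ v i := Finset.sum_nonneg fun j _ => mul_self_nonneg _
    by_cases h : Even i
    · simp only [c, h, if_true]; linarith
    · have : 0 < v i ⬝ᵥ v i := by
        have hi0 : i ≠ 0 := by rintro rfl; simp at h
        apply Finset.sum_pos'
        · exact fun j _ => mul_self_nonneg _
        · refine ⟨⟨i - 1, by omega⟩, Finset.mem_univ _, ?_⟩
          have : i - 1 + 1 = i := by omega
          simp [v, h, this]
      have := mul_self_nonneg (c i)
      linarith
  let U : Matrix (Fin (N + 1)) (Fin (N + 1)) ℝ := Matrix.of fun k i =>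
    Fin.cases (c i) (fun l => Q.mulVec (v i) l) k
  have U0 : ∀ i : Fin (N + 1), U 0 i = c i := fun _ => rfl
  have Us : ∀ (l : Fin N) (i : Fin (N + 1)), U l.succ i = Q.mulVec (v i) l := fun _ _ => rfl
  have Qdot : ∀ u u' : Fin N → ℝ, Q.mulVec u ⬝ᵥ Q.mulVec u' = u ⬝ᵥ u' := by
    intro u u'
    rw [Matrix.dotProduct_mulVec, ← Matrix.mulVec_transpose, Matrix.mulVec_mulVec, hQQ', Matrix.one_mulVec]
  refine ⟨A, U, ⟨?_, ?_⟩, ?_, ?_⟩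
  · ext i j
    refine Fin.cases ?_ (fun k => ?_) i <;> refine Fin.cases ?_ (fun l => ?_) j
    · rfl
    · rfl
    · rfl
    · rw [Matrix.transpose_apply, Ass, Ass, hJs]
  · have hz0 : ∀ l : Fin N, Q.mulVec z l ≠ 0 ↔ ((l : ℕ) = 0 ∨ (l : ℕ) = N - 1) := by
      intro l
      rw [hQz]
      by_cases h1 : (l : ℕ) = 0 <;> by_cases h2 : (l : ℕ) = N - 1
      · omega
      · rw [if_pos h1, if_neg h2]; simp [h1, hα]
      · rw [if_neg h1, if_pos h2]; simp [h2, hβ, hs.ne']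
      · simp [h1, h2]
    intro i j
    rw [cyc_adj hn]
    refine Fin.cases ?_ (fun k => ?_) i <;> refine Fin.cases ?_ (fun l => ?_) j
    · intro h; exact absurd rfl h
    · intro _
      rw [A0s, hz0]
      simp; omega
    · intro _
      rw [As0, hz0]
      simp; omega
    · intro hkl
      rw [Ass]
      have hkl' : (k : ℕ) ≠ l := fun h => hkl (by rw [Fin.ext h])
      rcases lt_or_gt_of_ne hkl' with h | h
      · rw [hJs]
        by_cases h2 : (l : ℕ) = k + 1
        · simp [J, D, hJ1 k l h2, h2]
        · simp [J, D, hJ0 k l (by omega)]; omega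
      · by_cases h2 : (k : ℕ) = l + 1
        · simp [J, D, hJ1 l k h2, h2]
        · simp [J, D, hJ0 l k (by omega)]; omega
  · have hUU : U.transpose * U = Matrix.diagonal (fun i : Fin (N + 1) => c i * c i + v i ⬝ᵥ v i) := by
      ext i k
      have : (U.transpose * U) i k = c i * c k + v i ⬝ᵥ v k := by
        rw [Matrix.mul_apply, Fin.sum_univ_succ, ← Qdot]
        rfl
      rw [this]
      by_cases h : i = k
      · subst h; simp
      · rw [Matrix.diagonal_apply_ne _ h]
        exact ortho i i.2 k k.2 (fun h' => h (Fin.ext h'))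
    intro h0
    have := congrArg Matrix.det hUU
    rw [Matrix.det_mul, h0, mul_zero, Matrix.det_diagonal] at this
    exact (Finset.prod_pos fun (i : Fin (N + 1)) _ => posd i i.2).ne this
  · ext k i
    rw [Matrix.mul_diagonal, Matrix.mul_apply, Fin.sum_univ_succ]
    refine Fin.cases ?_ (fun l => ?_) k
    · have := E1 i i.2
      rw [← Qdot] at this
      rw [A00, U0, mul_comm (c i)]
      exact this
    · rw [As0, U0]
      have h1 : ∑ j : Fin N, A l.succ j.succ * U j.succ i = J.mulVec (Q.mulVec (v i)) l := rfl
      have h2 : J.mulVec (Q.mulVec (v i)) = Q.mulVec (D.mulVec (v i)) := by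
        simp only [J]
        rw [Matrix.mulVec_mulVec, Matrix.mul_assoc, hQQ', Matrix.mul_one, Matrix.mulVec_mulVec]
      have h3 : c i • z + D.mulVec (v i) = d i • v i := by
        ext j
        simp only [Pi.add_apply, Pi.smul_apply, smul_eq_mul, D, Matrix.mulVec_diagonal]
        exact E2 i i.2 j
      have h4 := congrFun (congrArg Q.mulVec h3) l
      rw [Matrix.mulVec_add, Matrix.mulVec_smul, Matrix.mulVec_smul] at h4
      rw [h1, h2, Us, mul_comm _ (c i), mul_comm _ (d i)]
      exact h4
lemma nullity_le {V : Type*} [Fintype V] [DecidableEq V] (G : SimpleGraph V) (A : Matrix V V ℝ)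
    (hA : MatrixOfGraph G A) (B : Finset V) (hB : IsZeroForcingSet G ↑B) : nullity A ≤ B.card := by
  classical
  have hv : ∀ x : V → ℝ, A.mulVec x = 0 → (∀ b ∈ B, x b = 0) → x = 0 := by
    intro x hx hb
    ext v
    have := hB v
    induction this with
    | init v hv => exact hb v hv
    | force u w hu huw h ih1 ih2 =>
      have h0 := congrFun hx u
      simp only [Matrix.mulVec, dotProduct, Pi.zero_apply] at h0
      rw [Finset.sum_eq_single w] at h0
      · exact (mul_eq_zero.1 h0).resolve_left ((hA.2 u w huw.ne).2 huw)
      · intro y _ hy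
        by_cases hyu : y = u
        · rw [hyu, show x u = 0 from ih1, mul_zero]
        · by_cases hadj : G.Adj u y
          · rw [show x y = 0 from ih2 y hadj hy, mul_zero]
          · have : A u y = 0 := by
              by_contra h1
              exact hadj ((hA.2 u y (Ne.symm hyu)).1 h1)
            rw [this, zero_mul]
      · simp
  let φ : LinearMap.ker A.mulVecLin →ₗ[ℝ] (B → ℝ) :=
    (LinearMap.funLeft ℝ ℝ (fun b : B => (b : V))).comp (Submodule.subtype _)
  have hφ : Function.Injective φ := by
    rw [← LinearMap.ker_eq_bot, LinearMap.ker_eq_bot']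
    intro x hx
    apply Subtype.ext
    apply hv
    · exact LinearMap.mem_ker.1 x.2
    · intro b hb
      exact congrFun hx ⟨b, hb⟩
  have h1 := LinearMap.finrank_le_finrank_of_injective hφ
  have h2 := LinearMap.finrank_range_add_finrank_ker A.mulVecLin
  rw [Module.finrank_fintype_fun_eq_card] at h1 h2
  simp only [Fintype.card_coe] at h1
  unfold nullity
  have : A.rank = Module.finrank ℝ (LinearMap.range A.mulVecLin) := rfl
  omega

lemma main_eq {V : Type*} [Fintype V] [DecidableEq V] (G : SimpleGraph V) (k : ℕ)
    (h1 : ∃ B : Finset V, B.card = k ∧ IsZeroForcingSet G ↑B)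
    (h2 : ∃ A : Matrix V V ℝ, MatrixOfGraph G A ∧ nullity A = k) :
    maxNullity G = k ∧ zeroForcingNumber G = k := by
  obtain ⟨B, hBk, hB⟩ := h1
  obtain ⟨A, hA, hAk⟩ := h2
  constructor
  · apply le_antisymm
    · unfold maxNullity
      refine csSup_le (Set.nonempty_of_mem (x := k) ⟨A, hA, hAk⟩) ?_
      rintro _ ⟨A', hA', rfl⟩
      rw [← hBk]
      exact nullity_le G A' hA' B hB
    · apply le_csSup
      · refine ⟨k, ?_⟩
        rintro _ ⟨A', hA', rfl⟩
        rw [← hBk]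
        exact nullity_le G A' hA' B hB
      · exact ⟨A, hA, hAk⟩
  · apply le_antisymm
    · exact Nat.sInf_le ⟨B, hBk, hB⟩
    · unfold zeroForcingNumber
      refine le_csInf (Set.nonempty_of_mem (x := k) ⟨B, hBk, hB⟩) ?_
      rintro _ ⟨B', rfl, hB'⟩
      rw [← hAk]
      exact nullity_le G A hA B' hB'

lemma exists_matrix (n m : ℕ) (hn : 3 ≤ n) (hm : 3 ≤ m) :
    ∃ A : Matrix (Fin n × Fin m) (Fin n × Fin m) ℝ,
      MatrixOfGraph ((cycleGraph n).boxProd (cycleGraph m)) A ∧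
      nullity A = ∑ i : Fin n, (Finset.univ.filter
        (fun j : Fin m => (i : ℕ) / 2 = (j : ℕ) / 2)).card := by
  classical
  obtain ⟨A, U, hA, hU, hAU⟩ := iep n hn
  obtain ⟨B, W, hB, hW, hBW⟩ := iep m hm
  refine ⟨Matrix.kronecker A 1 - Matrix.kronecker 1 B, ⟨?_, ?_⟩, ?_⟩
  · have h1 := hA.1
    have h2 := hB.1
    unfold Matrix.IsSymm at *
    rw [Matrix.transpose_sub]
    have e1 : ∀ (X : Matrix (Fin n) (Fin n) ℝ) (Y : Matrix (Fin m) (Fin m) ℝ),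
        (Matrix.kronecker X Y).transpose = Matrix.kronecker X.transpose Y.transpose :=
      fun X Y => rfl
    rw [e1, e1, h1, h2, Matrix.transpose_one, Matrix.transpose_one]
  · rintro ⟨i, j⟩ ⟨i', j'⟩ hne
    rw [SimpleGraph.boxProd_adj]
    simp only [Matrix.sub_apply, Matrix.kronecker, Matrix.kroneckerMap_apply]
    by_cases hi : i = i'
    · subst hi
      have hj : j ≠ j' := fun h => hne (by rw [h])
      simp [hj, hB.2 j j' hj]
    · have := hA.2 i i' hi
      by_cases hj : j = j'
      · subst hj; simp [hi, this]
      · simp [hi, hj]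
  · set d : Fin n → ℝ := fun i => ((2 * ((i : ℕ) / 2) : ℕ) : ℝ)
    set e : Fin m → ℝ := fun i => ((2 * ((i : ℕ) / 2) : ℕ) : ℝ)
    have key : (Matrix.kronecker A 1 - Matrix.kronecker 1 B) * Matrix.kronecker U W
        = Matrix.kronecker U W * Matrix.diagonal (fun p : Fin n × Fin m => d p.1 - e p.2) := by
      have h1 : Matrix.diagonal (fun p : Fin n × Fin m => d p.1 - e p.2)
          = Matrix.kronecker (Matrix.diagonal d) 1 - Matrix.kronecker 1 (Matrix.diagonal e) := by
        rw [← Matrix.diagonal_one, ← Matrix.diagonal_one]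
        unfold Matrix.kronecker
        rw [Matrix.diagonal_kronecker_diagonal, Matrix.diagonal_kronecker_diagonal, Matrix.diagonal_sub]
        simp
      rw [h1, Matrix.sub_mul, Matrix.mul_sub]
      unfold Matrix.kronecker
      rw [← Matrix.mul_kronecker_mul, ← Matrix.mul_kronecker_mul, ← Matrix.mul_kronecker_mul,
        ← Matrix.mul_kronecker_mul, hAU, hBW]
      simp
    have hdet : (Matrix.kronecker U W).det ≠ 0 := by
      unfold Matrix.kronecker
      rw [Matrix.det_kronecker]
      exact mul_ne_zero (pow_ne_zero _ hU) (pow_ne_zero _ hW)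
    have hr := congrArg Matrix.rank key
    rw [Matrix.rank_mul_eq_left_of_det_ne_zero _ _ hdet, Matrix.rank_mul_eq_right_of_det_ne_zero _ _ hdet,
      Matrix.rank_diagonal] at hr
    unfold nullity
    rw [hr]
    have hc : Fintype.card {p : Fin n × Fin m // d p.1 - e p.2 ≠ 0}
       = Fintype.card (Fin n × Fin m) - Fintype.card {p : Fin n × Fin m // d p.1 - e p.2 = 0} :=
      Fintype.card_subtype_compl _
    have hle := Fintype.card_subtype_le (fun p : Fin n × Fin m => d p.1 - e p.2 = 0)
    have h3 : Fintype.card {p : Fin n × Fin m // d p.1 - e p.2 = 0} = ∑ i : Fin n, (Finset.univ.filter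
        (fun j : Fin m => (i : ℕ) / 2 = (j : ℕ) / 2)).card := by
      rw [Fintype.card_subtype, Finset.card_filter, Fintype.sum_prod_type]
      apply Finset.sum_congr rfl
      intro i _
      rw [Finset.card_filter]
      apply Finset.sum_congr rfl
      intro j _
      congr 1
      simp only [d, e, sub_eq_zero, Nat.cast_inj, eq_iff_iff]
      omega
    omega

lemma count_two (m i : ℕ) (h : 2 * (i / 2) + 1 < m) :
    (Finset.univ.filter (fun j : Fin m => i / 2 = (j : ℕ) / 2)).card = 2 := by
  have : Finset.univ.filter (fun j : Fin m => i / 2 = (j : ℕ) / 2)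
      = {⟨2 * (i / 2), by omega⟩, ⟨2 * (i / 2) + 1, h⟩} := by
    ext j
    simp [Fin.ext_iff]
    omega
  rw [this, Finset.card_pair (by simp)]

lemma count_one (m i : ℕ) (h : 2 * (i / 2) + 1 = m) :
    (Finset.univ.filter (fun j : Fin m => i / 2 = (j : ℕ) / 2)).card = 1 := by
  have : Finset.univ.filter (fun j : Fin m => i / 2 = (j : ℕ) / 2)
      = {⟨2 * (i / 2), by omega⟩} := by
    ext j
    have := j.2
    simp [Fin.ext_iff]
    omega
  rw [this, Finset.card_singleton]

/-- cyclic indexing -/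
def cy (n : ℕ) (hn : 3 ≤ n) (k : ℕ) : Fin n := ⟨k % n, Nat.mod_lt _ (by omega)⟩

lemma cy_adj (n : ℕ) (hn : 3 ≤ n) (k : ℕ) (x : Fin n) :
    (cycleGraph n).Adj (cy n hn (k + 1)) x ↔ x = cy n hn k ∨ x = cy n hn (k + 2) := by
  rw [cyc_adj hn]
  simp only [Fin.ext_iff, cy]
  have h1 : (k + 1) % n = if k % n + 1 = n then 0 else k % n + 1 := by
    rw [← Nat.mod_add_mod]
    split_ifs with h
    · rw [h, Nat.mod_self]
    · have := Nat.mod_lt k (show 0 < n by omega)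
      exact Nat.mod_eq_of_lt (by omega)
  have h2 : (k + 2) % n = if (k + 1) % n + 1 = n then 0 else (k + 1) % n + 1 := by
    rw [show k + 2 = k + 1 + 1 from rfl, ← Nat.mod_add_mod]
    split_ifs with h
    · rw [h, Nat.mod_self]
    · have := Nat.mod_lt (k + 1) (show 0 < n by omega)
      exact Nat.mod_eq_of_lt (by omega)
  have := Nat.mod_lt k (show 0 < n by omega)
  have := x.2
  generalize (k + 2) % n = s at *
  generalize (k + 1) % n = q at *
  generalize k % n = p at *
  split_ifs at h1 <;> split_ifs at h2 <;> omega

lemma cy_period (n : ℕ) (hn : 3 ≤ n) (k : ℕ) : cy n hn (k + n) = cy n hn k := by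
  simp [cy]

lemma cy_self (n : ℕ) (hn : 3 ≤ n) (i : Fin n) : cy n hn i = i := by
  simp [cy, Fin.ext_iff, Nat.mod_eq_of_lt i.2]

section force
variable {n m : ℕ} (hn : 3 ≤ n) (hm : 3 ≤ m) (B : Set (Fin n × Fin m))

def KK (a b : ℕ) : Prop :=
  ZFClosure ((cycleGraph n).boxProd (cycleGraph m)) B (cy n hn a, cy m hm b)

lemma KK_force (a b : ℕ) (w : Fin n × Fin m) (h0 : KK hn hm B (a + 1) (b + 1))
    (hadj : ((cycleGraph n).boxProd (cycleGraph m)).Adj (cy n hn (a + 1), cy m hm (b + 1)) w)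
    (h1 : (cy n hn a, cy m hm (b + 1)) ≠ w → KK hn hm B a (b + 1))
    (h2 : (cy n hn (a + 2), cy m hm (b + 1)) ≠ w → KK hn hm B (a + 2) (b + 1))
    (h3 : (cy n hn (a + 1), cy m hm b) ≠ w → KK hn hm B (a + 1) b)
    (h4 : (cy n hn (a + 1), cy m hm (b + 2)) ≠ w → KK hn hm B (a + 1) (b + 2)) :
    ZFClosure ((cycleGraph n).boxProd (cycleGraph m)) B w := by
  refine ZFClosure.force _ w h0 hadj ?_
  rintro ⟨x, y⟩ hx hne
  rw [SimpleGraph.boxProd_adj] at hx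
  simp only [cy_adj] at hx
  rcases hx with ⟨rfl | rfl, rfl⟩ | ⟨rfl | rfl, rfl⟩
  · exact h1 hne
  · exact h2 hne
  · exact h3 hne
  · exact h4 hne

lemma KK_up (a b : ℕ) (h0 : KK hn hm B (a + 1) (b + 1)) (h1 : KK hn hm B a (b + 1))
    (h3 : KK hn hm B (a + 1) b) (h4 : KK hn hm B (a + 1) (b + 2)) : KK hn hm B (a + 2) (b + 1) :=
  KK_force hn hm B a b _ h0 (by simp [SimpleGraph.boxProd_adj, cy_adj]) (fun _ => h1)
    (fun h => absurd rfl h) (fun _ => h3) (fun _ => h4)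

lemma KK_down (a b : ℕ) (h0 : KK hn hm B (a + 1) (b + 1)) (h2 : KK hn hm B (a + 2) (b + 1))
    (h3 : KK hn hm B (a + 1) b) (h4 : KK hn hm B (a + 1) (b + 2)) : KK hn hm B a (b + 1) :=
  KK_force hn hm B a b _ h0 (by simp [SimpleGraph.boxProd_adj, cy_adj]) (fun h => absurd rfl h)
    (fun _ => h2) (fun _ => h3) (fun _ => h4)

lemma KK_right (a b : ℕ) (h0 : KK hn hm B (a + 1) (b + 1)) (h1 : KK hn hm B a (b + 1))
    (h2 : KK hn hm B (a + 2) (b + 1)) (h3 : KK hn hm B (a + 1) b) : KK hn hm B (a + 1) (b + 2) :=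
  KK_force hn hm B a b _ h0 (by simp [SimpleGraph.boxProd_adj, cy_adj]) (fun _ => h1)
    (fun _ => h2) (fun _ => h3) (fun h => absurd rfl h)

lemma KK_per1 (a b : ℕ) : KK hn hm B (a + n) b ↔ KK hn hm B a b := by
  unfold KK; rw [cy_period]

lemma KK_per2 (a b : ℕ) : KK hn hm B a (b + m) ↔ KK hn hm B a b := by
  unfold KK; rw [cy_period]

lemma KK_cols (b : ℕ) (h0 : ∀ a, KK hn hm B a b) (h1 : ∀ a, KK hn hm B a (b + 1)) :
    IsZeroForcingSet ((cycleGraph n).boxProd (cycleGraph m)) B := by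
  have key : ∀ t, (∀ a, KK hn hm B a (b + t)) ∧ (∀ a, KK hn hm B a (b + t + 1)) := by
    intro t
    induction t with
    | zero => exact ⟨h0, h1⟩
    | succ t ih =>
      refine ⟨ih.2, fun a => ?_⟩
      obtain ⟨a', ha'⟩ : ∃ a', a + n = a' + 1 := ⟨a + n - 1, by omega⟩
      rw [← KK_per1, ha']
      exact KK_right hn hm B a' (b + t) (ih.2 _) (ih.2 _) (ih.2 _) (ih.1 _)
  have hmul : ∀ k a c, KK hn hm B a (c + k * m) ↔ KK hn hm B a c := by
    intro k
    induction k with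
    | zero => simp
    | succ k ih => intro a c; rw [Nat.succ_mul, ← Nat.add_assoc, KK_per2, ih]
  rintro ⟨i, j⟩
  rw [← cy_self n hn i, ← cy_self m hm j]
  change KK hn hm B i j
  rw [← hmul b]
  have : b ≤ b * m := Nat.le_mul_of_pos_right _ (by omega)
  have := (key (j + b * m - b)).1 i
  rwa [show b + (j + b * m - b) = j + b * m by omega] at this

end force

lemma zf_general (n m : ℕ) (hn : 3 ≤ n) (hm : 3 ≤ m) :
    ∃ B : Finset (Fin n × Fin m), B.card = 2 * n ∧
      IsZeroForcingSet ((cycleGraph n).boxProd (cycleGraph m)) ↑B := by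
  classical
  refine ⟨Finset.univ ×ˢ {cy m hm 0, cy m hm 1}, ?_, ?_⟩
  · rw [Finset.card_product, Finset.card_pair]
    · simp [mul_comm]
    · simp [cy, Nat.mod_eq_of_lt (show 1 < m by omega)]
  · apply KK_cols hn hm _ 0
    · intro a; exact ZFClosure.init _ (by simp)
    · intro a; exact ZFClosure.init _ (by simp)

lemma zf_odd (n : ℕ) (hn : 3 ≤ n) (ho : Odd n) :
    ∃ B : Finset (Fin n × Fin n), B.card = 2 * n - 1 ∧
      IsZeroForcingSet ((cycleGraph n).boxProd (cycleGraph n)) ↑B := by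
  classical
  obtain ⟨r, hr⟩ := ho
  refine ⟨({cy n hn 0} ×ˢ Finset.univ) ∪ ({cy n hn 1} ×ˢ Finset.univ.erase (cy n hn 0)), ?_, ?_⟩
  · rw [Finset.card_union_of_disjoint]
    · simp; omega
    · rw [Finset.disjoint_left]
      simp [cy, Nat.mod_eq_of_lt (show 1 < n by omega)]
  · set B : Set (Fin n × Fin n) := ↑(({cy n hn 0} ×ˢ Finset.univ) ∪
      ({cy n hn 1} ×ˢ Finset.univ.erase (cy n hn 0)) : Finset (Fin n × Fin n)) with hB
    have hcn : cy n hn n = cy n hn 0 := by simp [cy]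
    have hcn1 : cy n hn (n + 1) = cy n hn 1 := by rw [add_comm]; exact cy_period n hn 1
    have row0 : ∀ i, KK hn hn B n i := fun i => ZFClosure.init _ (by simp [hB, hcn])
    have row1 : ∀ i, 1 ≤ i → i ≤ n - 1 → KK hn hn B (n + 1) i := fun i h1 h2 =>
      ZFClosure.init _ (by
        have : cy n hn i ≠ cy n hn 0 := by
          simp [cy, Nat.mod_eq_of_lt (show i < n by omega)]; omega
        simp [hB, hcn1, this])
    have rowm : ∀ i, 1 ≤ i → i ≤ n - 1 → KK hn hn B (n - 1) i := by
      intro i h1 h2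
      obtain ⟨j, rfl⟩ : ∃ j, i = j + 1 := ⟨i - 1, by omega⟩
      apply KK_down
      · rw [show n - 1 + 1 = n by omega]; exact row0 _
      · rw [show n - 1 + 2 = n + 1 by omega]; exact row1 _ h1 h2
      · rw [show n - 1 + 1 = n by omega]; exact row0 _
      · rw [show n - 1 + 1 = n by omega]; exact row0 _
    have key : ∀ d, d + 1 ≤ r → ∀ i, (d ≤ i → i ≤ n - d → KK hn hn B (n + d) i ∧ KK hn hn B (n - d) i) ∧
        (d + 1 ≤ i → i ≤ n - (d + 1) → KK hn hn B (n + (d + 1)) i ∧ KK hn hn B (n - (d + 1)) i) := by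
      intro d
      induction d with
      | zero => intro _ i; exact ⟨fun _ _ => ⟨row0 i, row0 i⟩, fun h1 h2 => ⟨row1 i h1 h2, rowm i h1 h2⟩⟩
      | succ d ih =>
        intro hd i
        have ih := ih (by omega)
        refine ⟨(ih i).2, fun h1 h2 => ?_⟩
        obtain ⟨j, rfl⟩ : ∃ j, i = j + 1 := ⟨i - 1, by omega⟩
        constructor
        · apply KK_up hn hn B (n + d) j
          · exact ((ih (j + 1)).2 (by omega) (by omega)).1
          · exact ((ih (j + 1)).1 (by omega) (by omega)).1
          · exact ((ih j).2 (by omega) (by omega)).1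
          · exact ((ih (j + 2)).2 (by omega) (by omega)).1
        · apply KK_down hn hn B (n - (d + 1 + 1)) j
          · rw [show n - (d + 1 + 1) + 1 = n - (d + 1) by omega]
            exact ((ih (j + 1)).2 (by omega) (by omega)).2
          · rw [show n - (d + 1 + 1) + 2 = n - d by omega]
            exact ((ih (j + 1)).1 (by omega) (by omega)).2
          · rw [show n - (d + 1 + 1) + 1 = n - (d + 1) by omega]
            exact ((ih j).2 (by omega) (by omega)).2
          · rw [show n - (d + 1 + 1) + 1 = n - (d + 1) by omega]
            exact ((ih (j + 2)).2 (by omega) (by omega)).2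
    have key2 : ∀ d, d ≤ r → ∀ i, d ≤ i → i ≤ n - d → KK hn hn B (n + d) i ∧ KK hn hn B (n - d) i := by
      intro d hd i h1 h2
      rcases Nat.eq_zero_or_pos d with rfl | h
      · exact ⟨row0 i, row0 i⟩
      · obtain ⟨e, rfl⟩ : ∃ e, d = e + 1 := ⟨d - 1, by omega⟩
        exact (key e hd i).2 h1 h2
    have col : ∀ i, r ≤ i → i ≤ r + 1 → ∀ a, KK hn hn B a i := by
      intro i h1 h2 a
      have ha : KK hn hn B a i ↔ KK hn hn B (a % n) i := by
        unfold KK; simp [cy]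
      rw [ha]
      have hlt := Nat.mod_lt a (show 0 < n by omega)
      by_cases h : a % n ≤ r
      · rw [← KK_per1, add_comm]
        exact (key2 _ h i (by omega) (by omega)).1
      · have := (key2 (n - a % n) (by omega) i (by omega) (by omega)).2
        rwa [show n - (n - a % n) = a % n by omega] at this
    exact KK_cols hn hn B r (col r (by omega) (by omega)) (col (r + 1) (by omega) (by omega))

/-- For `m ≥ n ≥ 3`, `M(C_n □ C_m) = Z(C_n □ C_m) = 2n−1` if `m = n`
with `n` odd, and `= 2n` otherwise. -/
theorem stmt7 (n m : ℕ) (hn : 3 ≤ n) (hm : n ≤ m) :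
    (m = n ∧ Odd n →
      maxNullity ((cycleGraph n).boxProd (cycleGraph m)) = 2 * n - 1 ∧
      zeroForcingNumber ((cycleGraph n).boxProd (cycleGraph m)) = 2 * n - 1) ∧
    (¬(m = n ∧ Odd n) →
      maxNullity ((cycleGraph n).boxProd (cycleGraph m)) = 2 * n ∧
      zeroForcingNumber ((cycleGraph n).boxProd (cycleGraph m)) = 2 * n) := by
  constructor
  · rintro ⟨rfl, ho⟩
    apply main_eq _ _ (zf_odd m hn ho)
    obtain ⟨A, hA, hk⟩ := exists_matrix m m hn hn
    refine ⟨A, hA, ?_⟩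
    rw [hk]
    obtain ⟨r, rfl⟩ := ho
    rw [Fin.sum_univ_castSucc, Finset.sum_congr rfl (g := fun _ => 2), count_one]
    · simp <;> omega
    · simp <;> omega
    · intro i _
      apply count_two
      have := i.2
      simp <;> omega
  · intro h
    apply main_eq _ _ (zf_general n m hn (by omega))
    obtain ⟨A, hA, hk⟩ := exists_matrix n m hn (by omega)
    refine ⟨A, hA, ?_⟩
    rw [hk, Finset.sum_congr rfl (g := fun _ => 2)]
    · simp [mul_comm]
    · intro i _
      apply count_two
      have := i.2
      by_cases hmn : m = n
      · have : Even n := by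
          rw [← Nat.not_odd_iff_even]; exact fun ho => h ⟨hmn, ho⟩
        obtain ⟨k, rfl⟩ := this
        omega
      · omega

end PaperPD
end

section
/- For all n, m ≥ 3, Z(C_n □ C_m) ≤ 2n; in fact the vertex set of two consecutive copies of C_n (i.e., all vertices (g,h) with h ranging over two adjacent vertices of C_m) is a zero forcing set of C_n □ C_m. -/
namespace PaperPD

open SimpleGraph

variable {V α β : Type*}

open Fin.CommRing in
theorem zf_aux (n k : ℕ) (h : Fin (k + 3)) (B : Set (Fin n × Fin (k + 3)))
    (hB : ∀ p : Fin n × Fin (k + 3), (p.2 = h ∨ p.2 = h + 1) → p ∈ B) :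
    IsZeroForcingSet ((cycleGraph n).boxProd (cycleGraph (k + 3))) B := by
  have key : ∀ j : ℕ, ∀ g : Fin n,
      ZFClosure ((cycleGraph n).boxProd (cycleGraph (k + 3))) B (g, h + (j : Fin (k + 3))) ∧
      ZFClosure ((cycleGraph n).boxProd (cycleGraph (k + 3))) B (g, h + (j : Fin (k + 3)) + 1) := by
    intro j
    induction j with
    | zero =>
      intro g
      exact ⟨.init _ (hB _ (by simp)), .init _ (hB _ (by simp))⟩
    | succ j ih =>
      intro g
      have e : h + ((j + 1 : ℕ) : Fin (k + 3)) = h + (j : Fin (k + 3)) + 1 := by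
        push_cast
        ring
      rw [e]
      refine ⟨(ih g).2, ?_⟩
      generalize h + (j : Fin (k + 3)) = a at ih
      refine .force (g, a + 1) _ (ih g).2 ?_ ?_
      · rw [boxProd_adj]
        right
        refine ⟨?_, rfl⟩
        rw [cycleGraph_adj]
        right
        ring
      · rintro ⟨x, y⟩ hx hne
        rw [boxProd_adj] at hx
        rcases hx with ⟨-, hy⟩ | ⟨hy, hg⟩
        · simp only at hy
          subst hy
          exact (ih x).2
        · simp only at hy hg
          subst hg
          rw [cycleGraph_adj] at hy
          rcases hy with hy | hy
          · have : y = a := by linear_combination -hy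
            subst this
            exact (ih g).1
          · have : y = a + 1 + 1 := by linear_combination hy
            exact absurd (by rw [this]) hne
  rintro ⟨g, y⟩
  have := (key (y - h).val g).1
  rwa [Fin.cast_val_eq_self, add_sub_cancel] at this

/-- For `n, m ≥ 3`, the vertices of two consecutive copies of `C_n`
form a zero forcing set of `C_n □ C_m`; in particular `Z(C_n □ C_m) ≤ 2n`. -/
theorem stmt8 (n m : ℕ) (hn : 3 ≤ n) (hm : 3 ≤ m) :
    (∀ h h' : Fin m, (cycleGraph m).Adj h h' →
      IsZeroForcingSet ((cycleGraph n).boxProd (cycleGraph m))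
        {p : Fin n × Fin m | p.2 = h ∨ p.2 = h'}) ∧
    zeroForcingNumber ((cycleGraph n).boxProd (cycleGraph m)) ≤ 2 * n := by
  obtain ⟨k, rfl⟩ : ∃ k, m = k + 3 := ⟨m - 3, by omega⟩
  constructor
  · intro h h' hadj
    rw [cycleGraph_adj] at hadj
    rcases hadj with hh | hh
    · have : h = h' + 1 := eq_add_of_sub_eq' hh
      subst this
      exact zf_aux n k h' _ (fun p hp => hp.symm)
    · have : h' = h + 1 := eq_add_of_sub_eq' hh
      subst this
      exact zf_aux n k h _ (fun p hp => hp)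
  · refine Nat.sInf_le ⟨Finset.univ ×ˢ {0, 1}, ?_, zf_aux n k 0 _ ?_⟩
    · rw [Finset.card_product, Finset.card_pair (by simp)]
      simp [mul_comm]
    · intro p hp
      simpa using hp

end PaperPD
end

section
/- For m ≥ n ≥ 3, the power domination number of the Cartesian product of cycles satisfies ⌈n/2⌉ ≤ γ_P(C_n □ C_m). -/
namespace PaperPD

open SimpleGraph

variable {V α β : Type*}

section Helpers
open scoped Fin.CommRing

theorem line_aux {N : ℕ} (A D : Fin (N+3) → Prop)
    (h1 : ∀ x, A x → ¬ D (x+1)) (x0 : Fin (N+3)) (hx : A x0) :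
    ∀ K : ℕ, (∀ k : ℕ, k ≤ K → A (x0 + (k : Fin (N+3))) ∨ D (x0 + (k : Fin (N+3)))) →
      A (x0 + (K : Fin (N+3))) := by
  intro K
  induction K with
  | zero => intro _; simpa using hx
  | succ K ih =>
    intro h
    have h2 := ih (fun k hk => h k (by omega))
    have h3 := h1 _ h2
    rcases h (K+1) le_rfl with h4 | h4
    · exact h4
    · exact absurd (by push_cast at h4; rwa [← add_assoc] at h4) h3

theorem line_lemma {N : ℕ} (A D : Fin (N+3) → Prop)
    (h0 : ∀ x, A x → ¬ D x)
    (h1 : ∀ x, A x → ¬ D (x+1)) (h2 : ∀ x, D x → ¬ A (x+1))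
    (hS : ∀ x y, ¬ A x → ¬ D x → ¬ A y → ¬ D y → x = y) (x y : Fin (N+3))
    (hx : A x) (hy : D y) : False := by
  by_cases hs : ∃ s, ¬ A s ∧ ¬ D s
  · obtain ⟨s, hsA, hsD⟩ := hs
    have hAD : ∀ z, z ≠ s → A z ∨ D z := by
      intro z hz
      by_contra hc
      push Not at hc
      exact hz (hS z s hc.1 hc.2 hsA hsD)
    have key : ∀ z, z ≠ s → ∀ k : ℕ, k ≤ (z - (s+1)).val → s + 1 + (k : Fin (N+3)) ≠ s := by
      intro z hz k hk he
      have h3 : ((k+1 : ℕ) : Fin (N+3)) = 0 := by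
        push_cast
        have : s + 1 + (k : Fin (N+3)) = s + ((k : Fin (N+3)) + 1) := by abel
        rw [this] at he
        simpa using he
      have h4 : (N+3) ∣ k+1 := (Fin.natCast_eq_zero).1 h3
      have h5 := Nat.le_of_dvd (by omega) h4
      have h6 := (z - (s+1)).isLt
      have h7 : k = (z - (s+1)).val := by omega
      apply hz
      rw [h7, Fin.cast_val_eq_self] at he
      rw [← he]; abel
    have fin : ∀ z : Fin (N+3), s + 1 + (((z - (s+1)).val : ℕ) : Fin (N+3)) = z := by
      intro z
      rw [Fin.cast_val_eq_self]; abel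
    have hxs : x ≠ s := fun h => hsA (h ▸ hx)
    have hys : y ≠ s := fun h => hsD (h ▸ hy)
    rcases hAD (s+1) (by simpa using (key x hxs 0 (by omega))) with h | h
    · have := line_aux A D h1 (s+1) h _ (fun k hk => hAD _ (key y hys k hk))
      rw [fin] at this
      exact h0 _ this hy
    · have := line_aux D A h2 (s+1) h _ (fun k hk => (hAD _ (key x hxs k hk)).symm)
      rw [fin] at this
      exact h0 _ hx this
  · push Not at hs
    have := line_aux A D h1 x hx (y-x).val (fun k _ => by
      by_cases hA : A (x + (k : Fin (N+3)))
      · exact Or.inl hA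
      · exact Or.inr (hs _ hA))
    rw [Fin.cast_val_eq_self] at this
    rw [add_sub_cancel] at this
    exact h0 _ this hy

abbrev Tor (a b : ℕ) : SimpleGraph (Fin (a+3) × Fin (b+3)) :=
  (cycleGraph (a+3)).boxProd (cycleGraph (b+3))

theorem tor_adj_col {a b : ℕ} (i : Fin (a+3)) (j : Fin (b+3)) :
    (Tor a b).Adj (i,j) (i,j+1) := by
  simp [boxProd_adj, cycleGraph_adj]

theorem tor_adj_row {a b : ℕ} (i : Fin (a+3)) (j : Fin (b+3)) :
    (Tor a b).Adj (i,j) (i+1,j) := by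
  simp [boxProd_adj, cycleGraph_adj]

/-- U : used, T : separator. -/
structure Sep {a b : ℕ} (U T : Finset (Fin (a+3) × Fin (b+3))) : Prop where
  disj : Disjoint U T
  edge : ∀ u ∈ U, ∀ w, (Tor a b).Adj u w → w ∈ U ∨ w ∈ T

theorem Sep.col {a b : ℕ} {U T : Finset (Fin (a+3) × Fin (b+3))} (h : Sep U T)
    (i : Fin (a+3)) (hT : (T.filter (fun p => p.1 = i)).card ≤ 1) (x y : Fin (b+3))
    (hx : (i,x) ∈ U) (hyU : (i,y) ∉ U) (hyT : (i,y) ∉ T) : False := by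
  have hd := Finset.disjoint_left.1 h.disj
  refine line_lemma (fun z => (i,z) ∈ U) (fun z => (i,z) ∉ U ∧ (i,z) ∉ T) ?_ ?_ ?_ ?_ x y hx
    ⟨hyU, hyT⟩
  · intro z hz; simp [hz]
  · intro z hz h2
    have := h.edge _ hz _ (tor_adj_col i z)
    tauto
  · intro z hz h2
    have := h.edge _ h2 _ (tor_adj_col i z).symm
    tauto
  · intro z z' h1 h2 h3 h4
    have := Finset.card_le_one.1 hT (i,z) (by simp; tauto) (i,z') (by simp; tauto)
    simpa using this

theorem Sep.row {a b : ℕ} {U T : Finset (Fin (a+3) × Fin (b+3))} (h : Sep U T)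
    (i : Fin (b+3)) (hT : (T.filter (fun p => p.2 = i)).card ≤ 1) (x y : Fin (a+3))
    (hx : (x,i) ∈ U) (hyU : (y,i) ∉ U) (hyT : (y,i) ∉ T) : False := by
  have hd := Finset.disjoint_left.1 h.disj
  refine line_lemma (fun z => (z,i) ∈ U) (fun z => (z,i) ∉ U ∧ (z,i) ∉ T) ?_ ?_ ?_ ?_ x y hx
    ⟨hyU, hyT⟩
  · intro z hz; simp [hz]
  · intro z hz h2
    have := h.edge _ hz _ (tor_adj_row z i)
    tauto
  · intro z hz h2
    have := h.edge _ h2 _ (tor_adj_row z i).symm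
    tauto
  · intro z z' h1 h2 h3 h4
    have := Finset.card_le_one.1 hT (z,i) (by simp; tauto) (z',i) (by simp; tauto)
    simpa using this

theorem exists_light {a b : ℕ} (T : Finset (Fin (a+3) × Fin (b+3)))
    (hT : T.card < 2 * (a+3)) : ∃ i, (T.filter (fun p => p.1 = i)).card ≤ 1 := by
  by_contra hc
  push Not at hc
  have h1 := Finset.card_eq_sum_card_fiberwise (f := fun p : Fin (a+3) × Fin (b+3) => p.1)
    (s := T) (t := Finset.univ) (by intro x _; simp)
  have h2 : ∑ i : Fin (a+3), 2 ≤ ∑ i : Fin (a+3), (T.filter (fun p => p.1 = i)).card :=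
    Finset.sum_le_sum (fun i _ => hc i)
  simp at h2
  omega

theorem col_count {a b : ℕ} (T : Finset (Fin (a+3) × Fin (b+3))) (i : Fin (a+3)) :
    ∑ j : Fin (b+3), (if (i,j) ∈ T then 1 else 0) = (T.filter (fun p => p.1 = i)).card := by
  rw [← Finset.card_filter]
  apply Finset.card_bij (fun j _ => (i,j))
  · intro j hj; simpa using hj
  · intro j _ j' _ h; simpa using h
  · rintro ⟨i', j⟩ h
    simp at h
    exact ⟨j, by simp [← h.2, h.1], by simp [h.2]⟩

theorem exists_off {a b : ℕ} (T : Finset (Fin (a+3) × Fin (b+3))) (i : Fin (a+3))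
    (hT : (T.filter (fun p => p.1 = i)).card ≤ 1) : ∃ j, (i,j) ∉ T := by
  by_contra hc
  push Not at hc
  rw [← col_count] at hT
  simp [hc] at hT

/-- consistency -/
theorem Sep.consistent {a b : ℕ} {U T : Finset (Fin (a+3) × Fin (b+3))} (h : Sep U T)
    (hk : T.card < 2 * (b+3) - 2) (c d : Fin (a+3))
    (hc : (T.filter (fun p => p.1 = c)).card ≤ 1) (hd : (T.filter (fun p => p.1 = d)).card ≤ 1)
    (hcU : ∀ j, (c,j) ∉ U) (hdW : ∀ j, (d,j) ∈ U ∨ (d,j) ∈ T) : False := by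
  have h1 := Finset.card_eq_sum_card_fiberwise (f := fun p : Fin (a+3) × Fin (b+3) => p.2)
    (s := T) (t := Finset.univ) (by intro x _; simp)
  have h2 : ∑ j : Fin (b+3), 2 ≤ ∑ j : Fin (b+3), ((T.filter (fun p => p.2 = j)).card +
      (if (c,j) ∈ T then 1 else 0) + (if (d,j) ∈ T then 1 else 0)) := by
    apply Finset.sum_le_sum
    intro j _
    have pos : ∀ e : Fin (a+3), (e,j) ∈ T → 1 ≤ (T.filter (fun p => p.2 = j)).card := by
      intro e he
      exact Finset.card_pos.2 ⟨(e,j), by simp [he]⟩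
    by_cases e1 : (c,j) ∈ T
    · have := pos _ e1
      simp only [e1, if_true]; omega
    · by_cases e2 : (d,j) ∈ T
      · have := pos _ e2
        simp only [e2, if_true]; omega
      · simp only [e1, e2, if_false]
        by_contra hlt
        exact h.row j (by omega) d c ((hdW j).resolve_right e2) (hcU j) e1
  rw [Finset.sum_add_distrib, Finset.sum_add_distrib, col_count, col_count, ← h1] at h2
  simp at h2
  omega

theorem exists_force {V : Type*} {G : SimpleGraph V} {B X : Set V} (hB : IsZeroForcingSet G B)
    (hBX : B ⊆ X) (hX : ∃ v, v ∉ X) :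
    ∃ u ∈ X, ∃ w, w ∉ X ∧ G.Adj u w ∧ ∀ x, G.Adj u x → x ≠ w → x ∈ X := by
  by_contra hc
  push Not at hc
  obtain ⟨v, hv⟩ := hX
  apply hv
  have := hB v
  induction this with
  | init v hv' => exact hBX hv'
  | force u w hu huw h ih1 ih2 =>
    by_contra hw
    have hu' : u ∈ X := by
      by_contra h'
      exact h' (ih1 h')
    obtain ⟨x, hx1, hx2, hx3⟩ := hc u hu' w hw huw
    exact hx3 (ih2 x hx1 hx2 hx3)

theorem main_step {a b : ℕ} {B : Set (Fin (a+3) × Fin (b+3))} (hB : IsZeroForcingSet (Tor a b) B)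
    (k : ℕ) (hk1 : k + 1 < 2 * (a+3)) (hk2 : k < 2 * (b+3) - 2) :
    ∀ (r : ℕ) (U T : Finset (Fin (a+3) × Fin (b+3))), (U ∪ T)ᶜ.card = r → Sep U T →
      B ⊆ ↑(U ∪ T) → T.card ≤ k →
      (∃ c, (T.filter (fun p => p.1 = c)).card ≤ 1 ∧ ∀ j, (c,j) ∉ U) → False := by
  intro r
  induction r using Nat.strong_induction_on with
  | _ r ih =>
  intro U T hr hS hBX hTk ⟨c, hc, hcU⟩
  obtain ⟨j0, hj0⟩ := exists_off T c hc
  obtain ⟨u, huX, w, hwX, huw, hun⟩ := exists_force hB hBX ⟨(c,j0), by simp [hj0, hcU]⟩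
  simp only [Finset.coe_union, Set.mem_union, Finset.mem_coe] at huX hwX hun
  push Not at hwX
  have huU : u ∉ U := fun h => by
    have := hS.edge u h w huw
    tauto
  have huT : u ∈ T := huX.resolve_left huU
  obtain ⟨d, hd⟩ := exists_light (insert w T) (by
    have := Finset.card_insert_le w T; omega)
  obtain ⟨j1, hj1⟩ := exists_off _ d hd
  simp only [Finset.mem_insert, not_or] at hj1
  have hdT : (T.filter (fun p => p.1 = d)).card ≤ 1 :=
    (Finset.card_le_card (Finset.filter_subset_filter _ (Finset.subset_insert w T))).trans hd
  -- d has no U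
  have hdU : ∀ j, (d,j) ∉ U := by
    intro j hj
    refine hS.consistent (by omega) c d hc hdT hcU (fun j' => ?_)
    by_contra hcon
    push Not at hcon
    exact hS.col d hdT j j' hj hcon.1 hcon.2
  have hsub : insert w (T.erase u) ⊆ insert w T :=
    Finset.insert_subset_insert _ (Finset.erase_subset _ _)
  have hS' : Sep (insert u U) (insert w (T.erase u)) := by
    constructor
    · rw [Finset.disjoint_left]
      intro x hx hx'
      have hd := Finset.disjoint_left.1 hS.disj
      simp only [Finset.mem_insert, Finset.mem_erase] at hx hx'
      rcases hx with rfl | hx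
      · rcases hx' with rfl | h
        · exact hwX.2 huT
        · exact h.1 rfl
      · rcases hx' with rfl | h
        · exact hwX.1 hx
        · exact hd hx h.2
    · intro x hx y hxy
      simp only [Finset.mem_insert, Finset.mem_erase] at hx ⊢
      by_cases hyu : y = u
      · tauto
      rcases hx with rfl | hx
      · by_cases hyw : y = w
        · tauto
        · have := hun y hxy hyw
          tauto
      · have := hS.edge x hx y hxy
        tauto
  have hdT' : ((insert w (T.erase u)).filter (fun p => p.1 = d)).card ≤ 1 :=
    (Finset.card_le_card (Finset.filter_subset_filter _ hsub)).trans hd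
  have hXX : insert u U ∪ insert w (T.erase u) = insert w (U ∪ T) := by
    ext x
    simp only [Finset.mem_union, Finset.mem_insert, Finset.mem_erase]
    by_cases hxu : x = u
    · subst hxu; tauto
    · tauto
  refine ih _ ?_ _ _ rfl hS' ?_ ?_ ⟨d, hdT', ?_⟩
  · rw [← hr, hXX]
    apply Finset.card_lt_card
    rw [Finset.compl_ssubset_compl]
    apply Finset.ssubset_insert
    simp [hwX]
  · rw [hXX]
    exact hBX.trans (by simp)
  · rw [Finset.card_insert_of_notMem (by simp [hwX]), Finset.card_erase_of_mem huT]
    have : 0 < T.card := Finset.card_pos.2 ⟨u, huT⟩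
    omega
  · intro j hj
    refine hS'.col d hdT' j j1 hj ?_ ?_
    · simp only [Finset.mem_insert, not_or]
      exact ⟨fun h => hj1.2 (h ▸ huT), hdU _⟩
    · intro h
      have := hsub h
      simp only [Finset.mem_insert] at this
      tauto

theorem tor_adj_cases {a b : ℕ} {u v : Fin (a+3) × Fin (b+3)} (h : (Tor a b).Adj u v) :
    v = (u.1+1,u.2) ∨ v = (u.1-1,u.2) ∨ v = (u.1,u.2+1) ∨ v = (u.1,u.2-1) := by
  obtain ⟨u1, u2⟩ := u
  obtain ⟨v1, v2⟩ := v
  simp only [boxProd_adj, cycleGraph_adj, Prod.mk.injEq] at h ⊢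
  rcases h with ⟨h | h, rfl⟩ | ⟨h | h, rfl⟩
  · right; left; simp [← h]
  · left; simp [← h]
  · right; right; right; simp [← h]
  · right; right; left; simp [← h]

theorem comb_case {a b s : ℕ} (P : Finset (Fin (a+3) × Fin (b+3)))
    (hP : IsPowerDominatingSet (Tor a b) ↑P) (hs : P.card = s)
    (h1 : 4 * s + 1 < 2 * (a+3)) (h2 : 4 * s < 2 * (b+3) - 2) : False := by
  classical
  let Q : Finset (Fin (a+3) × Fin (b+3)) := P.biUnion (fun u =>
    {(u.1+1,u.2), (u.1-1,u.2), (u.1,u.2+1), (u.1,u.2-1)})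
  have hQ : Q.card ≤ 4 * s := by
    have := Finset.card_biUnion_le_card_mul P (fun u =>
      ({(u.1+1,u.2), (u.1-1,u.2), (u.1,u.2+1), (u.1,u.2-1)} : Finset (Fin (a+3) × Fin (b+3)))) 4
      (fun u _ => Finset.card_le_four)
    rw [hs] at this
    show Finset.card (P.biUnion _) ≤ _
    omega
  have hadj : ∀ u ∈ P, ∀ w, (Tor a b).Adj u w → w ∈ Q := by
    intro u hu w huw
    have := tor_adj_cases huw
    simp only [Q, Finset.mem_biUnion, Finset.mem_insert, Finset.mem_singleton]
    exact ⟨u, hu, this⟩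
  have hT : (Q \ P).card ≤ 4 * s := (Finset.card_le_card Finset.sdiff_subset).trans hQ
  have hS : Sep P (Q \ P) := by
    constructor
    · exact Finset.disjoint_sdiff
    · intro u hu w huw
      have := hadj u hu w huw
      simp only [Finset.mem_sdiff]
      tauto
  obtain ⟨c, hc⟩ := exists_light (Q \ P) (by omega)
  refine main_step hP (4*s) h1 h2 _ P (Q \ P) rfl hS ?_ hT ⟨c, hc, ?_⟩
  · rintro v (hv | ⟨u, hu, huv⟩)
    · simpa using Or.inl hv
    · have := hadj u hu v huv
      simp [this]
  · intro j hj
    have hcov : ∀ j', 1 ≤ (if (c,j') ∈ P then 1 else 0) + (if (c,j') ∈ Q \ P then 1 else 0) := by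
      intro j'
      by_contra hcon
      have e1 : (c,j') ∉ P := fun h => hcon (by simp [h])
      have e2 : (c,j') ∉ Q \ P := fun h => hcon (by simp only [h, if_true]; omega)
      exact hS.col c hc j j' hj e1 e2
    have h3 := Finset.sum_le_sum (fun j' (_ : j' ∈ (Finset.univ : Finset (Fin (b+3)))) => hcov j')
    rw [Finset.sum_add_distrib, col_count, col_count] at h3
    have h4 : (P.filter (fun p => p.1 = c)).card ≤ P.card := Finset.card_filter_le _ _
    simp at h3
    omega

theorem ker_of_zf {V : Type*} {G : SimpleGraph V} {B : Set V} (f : V → ℚ)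
    (hf : ∀ u w, G.Adj u w → f u = 0 → (∀ x, G.Adj u x → x ≠ w → f x = 0) → f w = 0)
    (hB : ∀ v ∈ B, f v = 0) (hZ : IsZeroForcingSet G B) (v : V) : f v = 0 := by
  induction hZ v with
  | init v hv => exact hB v hv
  | force u w hu huw h ih1 ih2 => exact hf u w huw ih1 ih2

theorem lin_case {a s : ℕ} (P : Finset (Fin (a+3) × Fin (a+3)))
    (hP : IsPowerDominatingSet (Tor a a) ↑P) (hs : P.card = s) (hodd : Odd (a+3))
    (h1 : 4 * s + 1 < 2 * (a+3)) : False := by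
  let F : ((Fin (a+3) → ℚ) × (Fin (a+3) → ℚ)) → Fin (a+3) → Fin (a+3) → ℚ :=
    fun q i j => q.1 (i+j) + q.2 (i-j)
  let L : ((Fin (a+3) → ℚ) × (Fin (a+3) → ℚ)) →ₗ[ℚ] ((P × Fin 4) → ℚ) × ℚ :=
    { toFun := fun q => (fun z => F q (z.1.1.1 + ![0,1,-1,0] z.2) (z.1.1.2 + ![0,0,0,1] z.2), q.1 0)
      map_add' := by
        intro x y
        ext z
        · simp [F]; ring
        · simp
      map_smul' := by
        intro x y
        ext z
        · simp [F]; ring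
        · simp }
  have hfin : Module.finrank ℚ (((P × Fin 4) → ℚ) × ℚ) <
      Module.finrank ℚ ((Fin (a+3) → ℚ) × (Fin (a+3) → ℚ)) := by
    simp [hs]; omega
  obtain ⟨q, hq, hq0⟩ := (Submodule.ne_bot_iff _).1 (LinearMap.ker_ne_bot_of_finrank_lt (f := L) hfin)
  have hq' : L q = 0 := hq
  have hev : ∀ p ∈ P, ∀ t : Fin 4, F q (p.1 + ![0,1,-1,0] t) (p.2 + ![0,0,0,1] t) = 0 := by
    intro p hp t
    exact congrFun (congrArg Prod.fst hq') (⟨p, hp⟩, t)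
  have hg0 : q.1 0 = 0 := congrArg Prod.snd hq'
  have heq : ∀ i j, F q (i+1) j + F q (i-1) j = F q i (j+1) + F q i (j-1) := by
    intro i j
    simp only [F]
    have e1 : i + 1 + j = i + (j+1) := by abel
    have e2 : i + 1 - j = i - (j-1) := by abel
    have e3 : i - 1 + j = i + (j-1) := by abel
    have e4 : i - 1 - j = i - (j+1) := by abel
    rw [e1, e2, e3, e4]; ring
  have two : ∀ x : Fin (a+3), x + 1 ≠ x - 1 := by
    intro x h
    have h2 : ((2:ℕ) : Fin (a+3)) = 0 := by
      have h3 : x + 1 - (x - 1) = 0 := by rw [h]; simp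
      have h4 : x + 1 - (x - 1) = 1 + 1 := by abel
      rw [h4] at h3
      push_cast
      rw [← one_add_one_eq_two]; exact h3
    have := Nat.le_of_dvd (by omega) ((Fin.natCast_eq_zero).1 h2)
    omega
  have one : ∀ x : Fin (a+3), x + 1 ≠ x := by intro x; simp
  have one' : ∀ x : Fin (a+3), x - 1 ≠ x := by intro x; simp
  have hzero : ∀ v : Fin (a+3) × Fin (a+3), F q v.1 v.2 = 0 := by
    refine ker_of_zf (fun v => F q v.1 v.2) ?_ ?_ hP
    · rintro ⟨i, j⟩ w huw _ h
      have a1 : (Tor a a).Adj (i,j) (i+1,j) := tor_adj_row i j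
      have a2 : (Tor a a).Adj (i,j) (i-1,j) := by
        have := (tor_adj_row (i-1) j).symm; simpa using this
      have a3 : (Tor a a).Adj (i,j) (i,j+1) := tor_adj_col i j
      have a4 : (Tor a a).Adj (i,j) (i,j-1) := by
        have := (tor_adj_col i (j-1)).symm; simpa using this
      have b1 := h _ a1
      have b2 := h _ a2
      have b3 := h _ a3
      have b4 := h _ a4
      have e := heq i j
      have t1 := two i
      have t2 := two j
      have o1 := one i
      have o2 := one j
      have o3 := one' i
      have o4 := one' j
      rcases tor_adj_cases huw with rfl | rfl | rfl | rfl <;>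
        simp only [ne_eq, Prod.mk.injEq, not_and, t1, t2, t1.symm, t2.symm, o1, o2, o3, o4,
          o1.symm, o2.symm, o3.symm, o4.symm, false_implies, implies_true, true_implies,
          not_false_eq_true, not_true_eq_false] at b1 b2 b3 b4 ⊢ <;> linarith
    · have hPN : ∀ u ∈ P, ∀ v, (Tor a a).Adj u v → F q v.1 v.2 = 0 := by
        intro u hu v huv
        have c1 := hev u hu 1
        have c2 := hev u hu 2
        have c3 := hev u hu 3
        simp [← sub_eq_add_neg] at c1 c2 c3
        have e := heq u.1 u.2
        rcases tor_adj_cases huv with rfl | rfl | rfl | rfl <;> simp only <;> linarith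
      rintro v (hv | ⟨u, hu, huv⟩)
      · simpa using hev v hv 0
      · exact hPN u hu v huv
  -- now g constant
  obtain ⟨t, ht⟩ := hodd
  have hh : ∀ x y : Fin (a+3), q.1 x + q.2 y = 0 := by
    intro x y
    have key : ∀ z : Fin (a+3), (t+1) • z + (t+1) • z = z := by
      intro z
      rw [← add_nsmul, show (t+1)+(t+1) = (a+3) + 1 by omega, add_nsmul, one_nsmul]
      have : (a+3) • z = 0 := by
        have := card_nsmul_eq_zero' (G := Fin (a+3)) (x := z)
        simpa using this
      rw [this, zero_add]
    have := hzero ((t+1) • (x+y), (t+1) • (x - y))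
    simp only [F] at this
    have e1 : (t+1) • (x+y) + (t+1) • (x-y) = x := by
      rw [← nsmul_add, show x + y + (x - y) = x + x by abel, nsmul_add, key]
    have e2 : (t+1) • (x+y) - (t+1) • (x-y) = y := by
      rw [← nsmul_sub, show x + y - (x - y) = y + y by abel, nsmul_add, key]
    rwa [e1, e2] at this
  apply hq0
  have h2 : ∀ y, q.2 y = 0 := fun y => by have := hh 0 y; linarith
  have h3 : ∀ x, q.1 x = 0 := fun x => by have := hh x 0; have := h2 0; linarith
  exact Prod.ext (funext h3) (funext h2)

end Helpers

/-- For `m ≥ n ≥ 3`, `⌈n/2⌉ ≤ γ_P(C_n □ C_m)`. -/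
theorem stmt19 (n m : ℕ) (hn : 3 ≤ n) (hm : n ≤ m) :
    (n + 1) / 2 ≤ powerDominationNumber ((cycleGraph n).boxProd (cycleGraph m)) := by
  obtain ⟨a, rfl⟩ : ∃ a, n = a + 3 := ⟨n - 3, by omega⟩
  obtain ⟨b, rfl⟩ : ∃ b, m = b + 3 := ⟨m - 3, by omega⟩
  unfold powerDominationNumber
  apply le_csInf
  · exact ⟨_, Finset.univ, rfl, fun v => ZFClosure.init v (Or.inl (by simp))⟩
  · rintro s ⟨P, hs, hP⟩
    by_contra hlt
    by_cases hab : a = b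
    · subst hab
      rcases Nat.even_or_odd (a+3) with he | ho
      · obtain ⟨t, ht⟩ := he
        exact comb_case P hP hs (by omega) (by omega)
      · exact lin_case P hP hs ho (by omega)
    · exact comb_case P hP hs (by omega) (by omega)

end PaperPD
end
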